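/- Let Cost(n, M) = K M n. Then, as ε → 0, inf { Cost(n, M) : (n, M) ∈ (ℕ*)², c_1 n^{−α}(1 + |ε_1(n)|) + ν_1 γ(M)^{1/2}(1 + φ_1(n) + φ_2(M)) ≤ ε } is asymptotically equivalent to K γ_0^{1/β} ν_1^{2/β} c_1^{1/α} · ε^{−(2/β + 1/α)} · (1 + 2α/β)^{1/α} · (1 + β/(2α))^{2/β}. Moreover this asymptotic bound may be achieved with parameters n(ε) ∼ (2α/β + 1)^{1/α} c_1^{1/α} ε^{−1/α} and M(ε) ∼ γ_0^{1/β} ν_1^{2/β} (1 + β/(2α))^{2/β} ε^{−2/β}. -/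

import Mathlib

/-!
Up to a relative error that vanishes as the sizes grow, the constraint is
`A n^{-a} + B M^{-b} ≤ ε` with `a = α` and `b = β / 2`. The weighted AM-GM inequality bounds the
product `n M` below on this set, with equality when the tolerance is split between the two terms
in the proportion `b : a`. The relative error is nonnegative, so the lower bound survives the
perturbation. Conversely, if `w(ε) → 0` bounds the relative error at all sizes beyond the optimal
ones, then rounding up the optimal sizes for the slightly smaller tolerance `ε / (1 + w(ε))`
yields admissible sizes which are equivalent to the optimal ones.
-/

open Filter Topology Real

open Asymptotics

lemma exists_tendsto_forall_ge_le {ι : Type*} [Preorder ι] [IsDirectedOrder ι] [Nonempty ι]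
    {f : ι → ℝ} {L : ℝ} (hf : Tendsto f atTop (𝓝 L)) :
    ∃ g : ι → ℝ, Tendsto g atTop (𝓝 L) ∧ ∀ᶠ i in atTop, ∀ j, i ≤ j → f j ≤ g i := by
  have hbound : ∀ b > L, ∀ᶠ i in atTop, ∀ j, i ≤ j → f j ≤ b := fun b hb ↦
    eventually_forall_ge_atTop.2 ((hf.eventually_lt_const hb).mono fun _ h ↦ h.le)
  have hle : ∀ᶠ i in atTop, ∀ j, i ≤ j → f j ≤ sSup (f '' Set.Ici i) := by
    filter_upwards [hbound (L + 1) (lt_add_one L)] with i hi j hij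
    exact le_csSup ⟨L + 1, Set.forall_mem_image.2 hi⟩ (Set.mem_image_of_mem f hij)
  refine ⟨fun i ↦ sSup (f '' Set.Ici i), tendsto_order.2 ⟨fun b hb ↦ ?_, fun b hb ↦ ?_⟩, hle⟩
  · filter_upwards [hf.eventually_const_lt hb, hle] with i hi hi'
    exact hi.trans_le (hi' i le_rfl)
  · obtain ⟨c, hLc, hcb⟩ := exists_between hb
    filter_upwards [hbound c hLc] with i hi
    exact (csSup_le (Set.nonempty_Ici.image f) (Set.forall_mem_image.2 hi)).trans_lt hcb

lemma isEquivalent_sInf {X : Type*} {l : Filter X} {S : X → Set ℝ} {f g : X → ℝ}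
    (hgf : g ~[l] f) (hlower : ∀ᶠ x in l, f x ∈ lowerBounds (S x)) (hmem : ∀ᶠ x in l, g x ∈ S x) :
    (fun x ↦ sInf (S x)) ~[l] f := by
  refine IsBigO.trans_isLittleO (IsBigO.of_bound 1 ?_) hgf
  filter_upwards [hlower, hmem] with x hf hg
  have hf_le : f x ≤ sInf (S x) := le_csInf ⟨_, hg⟩ hf
  have hle_g : sInf (S x) ≤ g x := csInf_le ⟨_, hf⟩ hg
  rw [one_mul, Pi.sub_apply, Pi.sub_apply, Real.norm_of_nonneg (sub_nonneg.2 hf_le),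
    Real.norm_of_nonneg (sub_nonneg.2 (hf_le.trans hle_g))]
  gcongr

lemma tendsto_div_one_of_isEquivalent {X : Type*} {l : Filter X} {f g : X → ℝ} (hfg : f ~[l] g)
    (hg : ∀ᶠ x in l, 0 < g x) : Tendsto (fun x ↦ f x / g x) l (𝓝 1) :=
  (isEquivalent_iff_tendsto_one (hg.mono fun _ h ↦ h.ne')).1 hfg

lemma rpow_mul_rpow_le_one {s t X Y : ℝ} (hs : 0 < s) (ht : 0 < t) (hX : 0 ≤ X) (hY : 0 ≤ Y)
    (h : s * X + t * Y ≤ s + t) : X ^ s * Y ^ t ≤ 1 := by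
  have hst : 0 < s + t := add_pos hs ht
  have hmean : X ^ (s / (s + t)) * Y ^ (t / (s + t)) ≤ 1 :=
    calc X ^ (s / (s + t)) * Y ^ (t / (s + t))
        ≤ s / (s + t) * X + t / (s + t) * Y :=
          geom_mean_le_arith_mean2_weighted (by positivity) (by positivity) hX hY (by field_simp)
      _ = (s * X + t * Y) / (s + t) := by ring
      _ ≤ 1 := (div_le_one hst).2 h
  calc X ^ s * Y ^ t = (X ^ (s / (s + t)) * Y ^ (t / (s + t))) ^ (s + t) := by
        rw [mul_rpow (by positivity) (by positivity), ← rpow_mul hX, ← rpow_mul hY,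
          div_mul_cancel₀ _ hst.ne', div_mul_cancel₀ _ hst.ne']
    _ ≤ 1 := rpow_le_one (by positivity) hmean hst.le

/-- The real number `x` for which `C x^{-s}` is the fraction `1 / (1 + s / t) = t / (s + t)` of
the tolerance `ε`. The pair `(optimalSize A a b ε, optimalSize B b a ε)` minimizes `x * y` under
the constraint `A x^{-a} + B y^{-b} ≤ ε`. -/
noncomputable def optimalSize (C s t ε : ℝ) : ℝ := ((1 + s / t) * C / ε) ^ (1 / s)

section optimalSize

variable {C s t ε : ℝ}

lemma optimalSize_pos (hC : 0 < C) (hs : 0 < s) (ht : 0 < t) (hε : 0 < ε) :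
    0 < optimalSize C s t ε := by
  unfold optimalSize
  positivity

lemma optimalSize_anti (hC : 0 < C) (hs : 0 < s) (ht : 0 < t) {η : ℝ} (hη : 0 < η) (hηε : η ≤ ε) :
    optimalSize C s t ε ≤ optimalSize C s t η := by
  have hε : 0 < ε := hη.trans_le hηε
  unfold optimalSize
  gcongr

lemma optimalSize_eq_mul (hC : 0 < C) (hs : 0 < s) (ht : 0 < t) (hε : 0 < ε) :
    optimalSize C s t ε = (1 + s / t) ^ (1 / s) * C ^ (1 / s) * ε ^ (-(1 / s)) := by
  rw [optimalSize, div_rpow (by positivity) hε.le, mul_rpow (by positivity) hC.le,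
    rpow_neg hε.le, div_eq_mul_inv]

lemma optimalSize_div (hC : 0 < C) (hs : 0 < s) (ht : 0 < t) (hε : 0 < ε) {r : ℝ} (hr : 0 < r) :
    optimalSize C s t (ε / r) = r ^ (1 / s) * optimalSize C s t ε := by
  rw [optimalSize, optimalSize, ← mul_rpow hr.le (by positivity)]
  congr 1
  field_simp

lemma optimalSize_eq_mul_rpow (hC : 0 < C) (hs : 0 < s) (ht : 0 < t) (hε : 0 < ε) {x : ℝ}
    (hx : 0 < x) :
    optimalSize C s t ε = x * ((1 + s / t) * (C * x ^ (-s)) / ε) ^ (1 / s) := by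
  have hsplit : (1 + s / t) * (C * x ^ (-s)) / ε = (1 + s / t) * C / ε * x ^ (-s) := by ring
  rw [hsplit, mul_rpow (by positivity) (by positivity), ← rpow_mul hx.le, neg_mul,
    mul_one_div_cancel hs.ne', rpow_neg_one, optimalSize]
  field_simp

lemma mul_rpow_neg_le_of_optimalSize_le (hC : 0 < C) (hs : 0 < s) (ht : 0 < t) (hε : 0 < ε) {x : ℝ}
    (hx : optimalSize C s t ε ≤ x) : C * x ^ (-s) ≤ ε / (1 + s / t) := by
  have hx0 : 0 < x := (optimalSize_pos hC hs ht hε).trans_le hx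
  rw [optimalSize, one_div, rpow_inv_le_iff_of_pos (by positivity) hx0.le hs,
    div_le_iff₀ hε] at hx
  rw [rpow_neg hx0.le, ← div_eq_mul_inv, div_le_div_iff₀ (by positivity) (by positivity)]
  linarith

lemma tendsto_optimalSize_atTop (hC : 0 < C) (hs : 0 < s) (ht : 0 < t) :
    Tendsto (optimalSize C s t) (𝓝[>] 0) atTop :=
  (tendsto_rpow_atTop (one_div_pos.2 hs)).comp
    (tendsto_inv_nhdsGT_zero.const_mul_atTop (by positivity))

lemma isEquivalent_natCeil_optimalSize_div (hC : 0 < C) (hs : 0 < s) (ht : 0 < t) {r : ℝ → ℝ}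
    (hr : Tendsto r (𝓝[>] 0) (𝓝 1)) :
    (fun ε ↦ (⌈optimalSize C s t (ε / r ε)⌉₊ : ℝ)) ~[𝓝[>] 0] optimalSize C s t := by
  have hequiv : (fun ε ↦ optimalSize C s t (ε / r ε)) ~[𝓝[>] 0] optimalSize C s t := by
    refine isEquivalent_iff_exists_eq_mul.2 ⟨fun ε ↦ r ε ^ (1 / s), ?_, ?_⟩
    · simpa only [one_rpow] using hr.rpow_const (p := 1 / s) (Or.inl one_ne_zero)
    · filter_upwards [self_mem_nhdsWithin, hr.eventually_const_lt one_pos] with ε hε hrε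
      exact optimalSize_div hC hs ht hε hrε
  have hceil : (fun ε ↦ (⌈optimalSize C s t (ε / r ε)⌉₊ : ℝ)) ~[𝓝[>] 0]
      fun ε ↦ optimalSize C s t (ε / r ε) :=
    isEquivalent_nat_ceil.comp_tendsto
      (hequiv.symm.tendsto_atTop (tendsto_optimalSize_atTop hC hs ht))
  exact hceil.trans hequiv

end optimalSize

section PowerLawConstraint

variable {A a B b ε : ℝ}

theorem optimalSize_mul_optimalSize_le (hA : 0 < A) (ha : 0 < a) (hB : 0 < B) (hb : 0 < b)
    (hε : 0 < ε) {x y : ℝ} (hx : 0 < x) (hy : 0 < y) (h : A * x ^ (-a) + B * y ^ (-b) ≤ ε) :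
    optimalSize A a b ε * optimalSize B b a ε ≤ x * y := by
  set X := (1 + a / b) * (A * x ^ (-a)) / ε with hX
  set Y := (1 + b / a) * (B * y ^ (-b)) / ε with hY
  have hXY : 1 / a * X + 1 / b * Y ≤ 1 / a + 1 / b :=
    calc 1 / a * X + 1 / b * Y
        = (1 / a + 1 / b) * ((A * x ^ (-a) + B * y ^ (-b)) / ε) := by
          rw [hX, hY]; field_simp; ring
      _ ≤ 1 / a + 1 / b := mul_le_of_le_one_right (by positivity) ((div_le_one hε).2 h)
  calc optimalSize A a b ε * optimalSize B b a ε
      = x * y * (X ^ (1 / a) * Y ^ (1 / b)) := by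
        rw [optimalSize_eq_mul_rpow hA ha hb hε hx, optimalSize_eq_mul_rpow hB hb ha hε hy,
          mul_mul_mul_comm]
    _ ≤ x * y := mul_le_of_le_one_right (by positivity)
        (rpow_mul_rpow_le_one (by positivity) (by positivity) (by positivity) (by positivity) hXY)

/-- The pairs `p = (n, M)` of positive integers with
`A n^{-a} (1 + u p) + B M^{-b} (1 + v p) ≤ ε`: two power-law errors with relative
perturbations `u` and `v` add up to at most the tolerance `ε`. -/
def admissibleSizes (A a B b : ℝ) (u v : ℕ × ℕ → ℝ) (ε : ℝ) : Set (ℕ × ℕ) :=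
  {p | 1 ≤ p.1 ∧ 1 ≤ p.2 ∧
    A * (p.1 : ℝ) ^ (-a) * (1 + u p) + B * (p.2 : ℝ) ^ (-b) * (1 + v p) ≤ ε}

variable {u v : ℕ × ℕ → ℝ}

lemma optimalSize_mul_optimalSize_le_of_mem_admissibleSizes (hA : 0 < A) (ha : 0 < a) (hB : 0 < B)
    (hb : 0 < b) (hε : 0 < ε) {p : ℕ × ℕ} (hu : 0 ≤ u p) (hv : 0 ≤ v p)
    (hp : p ∈ admissibleSizes A a B b u v ε) :
    optimalSize A a b ε * optimalSize B b a ε ≤ p.1 * p.2 := by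
  obtain ⟨hn, hM, hle⟩ := hp
  refine optimalSize_mul_optimalSize_le hA ha hB hb hε (Nat.cast_pos.2 hn) (Nat.cast_pos.2 hM)
    (le_trans (add_le_add ?_ ?_) hle)
  · exact le_mul_of_one_le_right (by positivity) (le_add_of_nonneg_right hu)
  · exact le_mul_of_one_le_right (by positivity) (le_add_of_nonneg_right hv)

lemma mem_admissibleSizes_of_optimalSize_le (hA : 0 < A) (ha : 0 < a) (hB : 0 < B) (hb : 0 < b)
    (hε : 0 < ε) {w : ℝ} (hw : 0 ≤ w) {p : ℕ × ℕ} (hn : optimalSize A a b (ε / (1 + w)) ≤ p.1)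
    (hM : optimalSize B b a (ε / (1 + w)) ≤ p.2) (hu : u p ≤ w) (hv : v p ≤ w) :
    p ∈ admissibleSizes A a B b u v ε := by
  have hη : 0 < ε / (1 + w) := by positivity
  refine ⟨Nat.cast_pos.1 ((optimalSize_pos hA ha hb hη).trans_le hn),
    Nat.cast_pos.1 ((optimalSize_pos hB hb ha hη).trans_le hM), ?_⟩
  calc A * (p.1 : ℝ) ^ (-a) * (1 + u p) + B * (p.2 : ℝ) ^ (-b) * (1 + v p)
      ≤ A * (p.1 : ℝ) ^ (-a) * (1 + w) + B * (p.2 : ℝ) ^ (-b) * (1 + w) := by gcongr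
    _ ≤ ε / (1 + w) / (1 + a / b) * (1 + w) + ε / (1 + w) / (1 + b / a) * (1 + w) := by
        gcongr
        · exact mul_rpow_neg_le_of_optimalSize_le hA ha hb hη hn
        · exact mul_rpow_neg_le_of_optimalSize_le hB hb ha hη hM
    _ = ε := by field_simp; ring

lemma exists_tendsto_zero_forall_optimalSize_le (hA : 0 < A) (ha : 0 < a) (hB : 0 < B)
    (hb : 0 < b) {f : ℕ × ℕ → ℝ} (hf : Tendsto f (atTop ×ˢ atTop) (𝓝 0)) :
    ∃ w : ℝ → ℝ, Tendsto w (𝓝[>] 0) (𝓝 0) ∧ ∀ᶠ ε in 𝓝[>] 0, ∀ p : ℕ × ℕ,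
      optimalSize A a b ε ≤ p.1 → optimalSize B b a ε ≤ p.2 → f p ≤ w ε := by
  rw [prod_atTop_atTop_eq] at hf
  obtain ⟨g, hg, hfg⟩ := exists_tendsto_forall_ge_le hf
  have hsizes : Tendsto (fun ε ↦ (⌈optimalSize A a b ε⌉₊, ⌈optimalSize B b a ε⌉₊))
      (𝓝[>] 0) atTop := by
    rw [← prod_atTop_atTop_eq]
    exact (tendsto_nat_ceil_atTop.comp (tendsto_optimalSize_atTop hA ha hb)).prodMk
      (tendsto_nat_ceil_atTop.comp (tendsto_optimalSize_atTop hB hb ha))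
  exact ⟨_, hg.comp hsizes, (hsizes.eventually hfg).mono fun ε hε p hn hM ↦
    hε p ⟨Nat.ceil_le.2 hn, Nat.ceil_le.2 hM⟩⟩

theorem exists_mem_admissibleSizes_isEquivalent_optimalSize (hA : 0 < A) (ha : 0 < a) (hB : 0 < B)
    (hb : 0 < b) (hu0 : ∀ p, 0 ≤ u p) (hv0 : ∀ p, 0 ≤ v p)
    (hu : Tendsto u (atTop ×ˢ atTop) (𝓝 0)) (hv : Tendsto v (atTop ×ˢ atTop) (𝓝 0)) :
    ∃ n M : ℝ → ℕ, (∀ᶠ ε in 𝓝[>] 0, (n ε, M ε) ∈ admissibleSizes A a B b u v ε) ∧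
      (fun ε ↦ (n ε : ℝ)) ~[𝓝[>] 0] optimalSize A a b ∧
      (fun ε ↦ (M ε : ℝ)) ~[𝓝[>] 0] optimalSize B b a := by
  obtain ⟨w, hw, hle⟩ := exists_tendsto_zero_forall_optimalSize_le hA ha hB hb
    (f := fun p ↦ u p + v p) (by simpa only [add_zero] using hu.add hv)
  have hr : Tendsto (fun ε ↦ 1 + w ε) (𝓝[>] 0) (𝓝 1) := by
    simpa only [add_zero] using hw.const_add 1
  refine ⟨fun ε ↦ ⌈optimalSize A a b (ε / (1 + w ε))⌉₊,
    fun ε ↦ ⌈optimalSize B b a (ε / (1 + w ε))⌉₊, ?_,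
    isEquivalent_natCeil_optimalSize_div hA ha hb hr,
    isEquivalent_natCeil_optimalSize_div hB hb ha hr⟩
  filter_upwards [self_mem_nhdsWithin, hle] with ε hε hwε
  have hw0 : 0 ≤ w ε := (add_nonneg (hu0 _) (hv0 _)).trans
    (hwε (_, _) (Nat.le_ceil _) (Nat.le_ceil _))
  have hη : 0 < ε / (1 + w ε) := div_pos hε (by positivity)
  have hηε : ε / (1 + w ε) ≤ ε := div_le_self (le_of_lt hε) (by linarith)
  have huv := hwε (⌈optimalSize A a b (ε / (1 + w ε))⌉₊, ⌈optimalSize B b a (ε / (1 + w ε))⌉₊)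
    ((optimalSize_anti hA ha hb hη hηε).trans (Nat.le_ceil _))
    ((optimalSize_anti hB hb ha hη hηε).trans (Nat.le_ceil _))
  exact mem_admissibleSizes_of_optimalSize_le hA ha hB hb hε hw0 (Nat.le_ceil _) (Nat.le_ceil _)
    ((le_add_of_nonneg_right (hv0 _)).trans huv) ((le_add_of_nonneg_left (hu0 _)).trans huv)

theorem isEquivalent_sInf_image_admissibleSizes (hA : 0 < A) (ha : 0 < a) (hB : 0 < B) (hb : 0 < b)
    (hu0 : ∀ p, 0 ≤ u p) (hv0 : ∀ p, 0 ≤ v p)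
    (hu : Tendsto u (atTop ×ˢ atTop) (𝓝 0)) (hv : Tendsto v (atTop ×ˢ atTop) (𝓝 0))
    {K : ℝ} (hK : 0 ≤ K) :
    (fun ε ↦ sInf ((fun p : ℕ × ℕ ↦ K * p.2 * p.1) '' admissibleSizes A a B b u v ε)) ~[𝓝[>] 0]
      fun ε ↦ K * optimalSize B b a ε * optimalSize A a b ε := by
  obtain ⟨n, M, hadm, hn, hM⟩ :=
    exists_mem_admissibleSizes_isEquivalent_optimalSize hA ha hB hb hu0 hv0 hu hv
  refine isEquivalent_sInf ((IsEquivalent.refl.mul hM).mul hn) ?_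
    (hadm.mono fun ε hε ↦ ⟨(n ε, M ε), hε, rfl⟩)
  filter_upwards [self_mem_nhdsWithin] with ε hε
  rintro _ ⟨p, hp, rfl⟩
  calc K * optimalSize B b a ε * optimalSize A a b ε
      = K * (optimalSize A a b ε * optimalSize B b a ε) := by ring
    _ ≤ K * (p.1 * p.2) :=
        mul_le_mul_of_nonneg_left (optimalSize_mul_optimalSize_le_of_mem_admissibleSizes
          hA ha hB hb hε (hu0 p) (hv0 p) hp) hK
    _ = K * p.2 * p.1 := by ring

theorem admissibleSizes_cost_asymptotics (hA : 0 < A) (ha : 0 < a) (hB : 0 < B) (hb : 0 < b)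
    (hu0 : ∀ p, 0 ≤ u p) (hv0 : ∀ p, 0 ≤ v p)
    (hu : Tendsto u (atTop ×ˢ atTop) (𝓝 0)) (hv : Tendsto v (atTop ×ˢ atTop) (𝓝 0))
    {K : ℝ} (hK : 0 < K) :
    Tendsto (fun ε ↦ sInf ((fun p : ℕ × ℕ ↦ K * p.2 * p.1) '' admissibleSizes A a B b u v ε) /
        (K * optimalSize B b a ε * optimalSize A a b ε)) (𝓝[>] 0) (𝓝 1) ∧
      ∃ n M : ℝ → ℕ, (∀ᶠ ε in 𝓝[>] 0, (n ε, M ε) ∈ admissibleSizes A a B b u v ε) ∧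
        Tendsto (fun ε ↦ n ε / optimalSize A a b ε) (𝓝[>] 0) (𝓝 1) ∧
        Tendsto (fun ε ↦ M ε / optimalSize B b a ε) (𝓝[>] 0) (𝓝 1) ∧
        Tendsto (fun ε ↦ K * M ε * n ε / (K * optimalSize B b a ε * optimalSize A a b ε))
          (𝓝[>] 0) (𝓝 1) := by
  have hpos : ∀ᶠ ε : ℝ in 𝓝[>] 0, 0 < ε := self_mem_nhdsWithin
  have hn_pos := hpos.mono fun _ ↦ optimalSize_pos hA ha hb
  have hM_pos := hpos.mono fun _ ↦ optimalSize_pos hB hb ha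
  have hcost_pos : ∀ᶠ ε in 𝓝[>] 0, 0 < K * optimalSize B b a ε * optimalSize A a b ε := by
    filter_upwards [hn_pos, hM_pos] with ε hn hM using by positivity
  obtain ⟨n, M, hadm, hn, hM⟩ :=
    exists_mem_admissibleSizes_isEquivalent_optimalSize hA ha hB hb hu0 hv0 hu hv
  exact ⟨tendsto_div_one_of_isEquivalent
      (isEquivalent_sInf_image_admissibleSizes hA ha hB hb hu0 hv0 hu hv hK.le) hcost_pos,
    n, M, hadm, tendsto_div_one_of_isEquivalent hn hn_pos,
    tendsto_div_one_of_isEquivalent hM hM_pos,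
    tendsto_div_one_of_isEquivalent ((IsEquivalent.refl.mul hM).mul hn) hcost_pos⟩

end PowerLawConstraint

section StepSize

variable {c α β γ ν ε : ℝ}

lemma sqrt_div_rpow {x : ℝ} (hγ : 0 ≤ γ) (hx : 0 ≤ x) :
    √(γ / x ^ β) = √γ * x ^ (-(β / 2)) := by
  rw [sqrt_div hγ, sqrt_eq_rpow (x ^ β), ← rpow_mul hx, mul_one_div, rpow_neg hx, div_eq_mul_inv]

lemma mem_admissibleSizes_mul_sqrt_iff {u v : ℕ × ℕ → ℝ} {p : ℕ × ℕ} (hγ : 0 ≤ γ) :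
    p ∈ admissibleSizes c α (ν * √γ) (β / 2) u v ε ↔ 1 ≤ p.1 ∧ 1 ≤ p.2 ∧
      c * (p.1 : ℝ) ^ (-α) * (1 + u p) + ν * √(γ / (p.2 : ℝ) ^ β) * (1 + v p) ≤ ε := by
  rw [sqrt_div_rpow hγ (Nat.cast_nonneg p.2), ← mul_assoc ν]
  rfl

lemma optimalSize_half_right (hc : 0 < c) (hα : 0 < α) (hβ : 0 < β) (hε : 0 < ε) :
    optimalSize c α (β / 2) ε = (2 * α / β + 1) ^ (1 / α) * c ^ (1 / α) * ε ^ (-(1 / α)) := by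
  rw [optimalSize_eq_mul hc hα (half_pos hβ) hε, div_div_eq_mul_div, mul_comm α 2,
    add_comm (1 : ℝ)]

lemma optimalSize_mul_sqrt_half_left (hν : 0 < ν) (hγ : 0 < γ) (hα : 0 < α) (hβ : 0 < β)
    (hε : 0 < ε) :
    optimalSize (ν * √γ) (β / 2) α ε =
      γ ^ (1 / β) * ν ^ (2 / β) * (1 + β / (2 * α)) ^ (2 / β) * ε ^ (-(2 / β)) := by
  have hexp : 1 / 2 * (2 / β) = 1 / β := by ring
  rw [optimalSize_eq_mul (by positivity) (half_pos hβ) hα hε, one_div_div, div_div,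
    mul_rpow hν.le (sqrt_nonneg γ), sqrt_eq_rpow, ← rpow_mul hγ.le, hexp]
  ring

lemma mul_optimalSize_mul_optimalSize (hc : 0 < c) (hν : 0 < ν) (hγ : 0 < γ) (hα : 0 < α)
    (hβ : 0 < β) (hε : 0 < ε) (K : ℝ) :
    K * optimalSize (ν * √γ) (β / 2) α ε * optimalSize c α (β / 2) ε =
      K * γ ^ (1 / β) * ν ^ (2 / β) * c ^ (1 / α) * ε ^ (-(2 / β + 1 / α)) *
        (1 + 2 * α / β) ^ (1 / α) * (1 + β / (2 * α)) ^ (2 / β) := by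
  rw [optimalSize_mul_sqrt_half_left hν hγ hα hβ hε, optimalSize_half_right hc hα hβ hε,
    neg_add, rpow_add hε, add_comm (2 * α / β)]
  ring

end StepSize

theorem crude_sa_cost_asymptotics_general (α : ℝ) (hα : 0 < α)
    (β γ0 K c1 ν1 : ℝ) (hβ : 0 < β)
    (hγ0 : 0 < γ0) (hK : 0 < K) (hc1 : 0 < c1) (hν1 : 0 < ν1)
    (ε1 : ℕ → ℝ) (hε1 : Tendsto ε1 atTop (𝓝 0))
    (φ1 φ2 : ℕ → ℝ) (hφ1nn : ∀ n, 0 ≤ φ1 n) (hφ2nn : ∀ M, 0 ≤ φ2 M)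
    (hφ1 : Tendsto φ1 atTop (𝓝 0)) (hφ2 : Tendsto φ2 atTop (𝓝 0))
    (constraint : ℕ → ℕ → ℝ → Prop)
    (hconstraint : ∀ n M ε, constraint n M ε ↔
      c1 * (n : ℝ) ^ (-α) * (1 + |ε1 n|) +
          ν1 * Real.sqrt (γ0 / (M : ℝ) ^ β) * (1 + φ1 n + φ2 M) ≤ ε)
    (cost : ℕ → ℕ → ℝ) (hcost : ∀ n M, cost n M = K * (M : ℝ) * (n : ℝ))
    (V : ℝ → ℝ)
    (hV : ∀ ε, V ε = sInf {c : ℝ | ∃ n M : ℕ, 1 ≤ n ∧ 1 ≤ M ∧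
      constraint n M ε ∧ c = cost n M})
    (asymp : ℝ → ℝ)
    (hasymp : ∀ ε, asymp ε =
      K * γ0 ^ (1 / β) * ν1 ^ (2 / β) * c1 ^ (1 / α) *
        ε ^ (-(2 / β + 1 / α)) * (1 + 2 * α / β) ^ (1 / α) *
        (1 + β / (2 * α)) ^ (2 / β)) :
    Tendsto (fun ε => V ε / asymp ε) (𝓝[>] (0 : ℝ)) (𝓝 1) ∧
      ∃ nf Mf : ℝ → ℕ,
        (∀ᶠ ε in 𝓝[>] (0 : ℝ), constraint (nf ε) (Mf ε) ε) ∧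
        Tendsto (fun ε => (nf ε : ℝ) /
            ((2 * α / β + 1) ^ (1 / α) * c1 ^ (1 / α) * ε ^ (-(1 / α))))
          (𝓝[>] (0 : ℝ)) (𝓝 1) ∧
        Tendsto (fun ε => (Mf ε : ℝ) /
            (γ0 ^ (1 / β) * ν1 ^ (2 / β) * (1 + β / (2 * α)) ^ (2 / β) *
              ε ^ (-(2 / β))))
          (𝓝[>] (0 : ℝ)) (𝓝 1) ∧
        Tendsto (fun ε => cost (nf ε) (Mf ε) / asymp ε) (𝓝[>] (0 : ℝ)) (𝓝 1) := by
  have hB : 0 < ν1 * √γ0 := by positivity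
  let u : ℕ × ℕ → ℝ := fun p ↦ |ε1 p.1|
  let v : ℕ × ℕ → ℝ := fun p ↦ φ1 p.1 + φ2 p.2
  have hu : Tendsto u (atTop ×ˢ atTop) (𝓝 0) := by
    simpa only [u, abs_zero, Function.comp_apply] using (hε1.comp tendsto_fst).abs
  have hv : Tendsto v (atTop ×ˢ atTop) (𝓝 0) := by
    simpa only [v, add_zero, Function.comp_apply] using
      (hφ1.comp tendsto_fst).add (hφ2.comp tendsto_snd)
  have hmem : ∀ ε (p : ℕ × ℕ), p ∈ admissibleSizes c1 α (ν1 * √γ0) (β / 2) u v ε ↔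
      1 ≤ p.1 ∧ 1 ≤ p.2 ∧ constraint p.1 p.2 ε := fun ε p ↦ by
    rw [mem_admissibleSizes_mul_sqrt_iff hγ0.le, hconstraint, add_assoc (1 : ℝ)]
  have hV_eq : ∀ ε, V ε = sInf ((fun p : ℕ × ℕ ↦ K * p.2 * p.1) ''
      admissibleSizes c1 α (ν1 * √γ0) (β / 2) u v ε) := fun ε ↦ by
    simp only [hV, Set.image, hmem, Prod.exists, and_assoc, hcost, eq_comm]
  have hasymp_eq : ∀ ε > 0, K * optimalSize (ν1 * √γ0) (β / 2) α ε *
      optimalSize c1 α (β / 2) ε = asymp ε := fun ε hε ↦ by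
    rw [hasymp, mul_optimalSize_mul_optimalSize hc1 hν1 hγ0 hα hβ hε]
  obtain ⟨hinf, nf, Mf, hadm, hn, hM, hcost_tendsto⟩ :=
    admissibleSizes_cost_asymptotics (u := u) (v := v) hc1 hα hB (half_pos hβ)
      (fun _ ↦ abs_nonneg _) (fun _ ↦ add_nonneg (hφ1nn _) (hφ2nn _)) hu hv hK
  refine ⟨hinf.congr' ?_, nf, Mf, hadm.mono fun ε hε ↦ ((hmem ε (nf ε, Mf ε)).1 hε).2.2,
    hn.congr' ?_, hM.congr' ?_, hcost_tendsto.congr' ?_⟩ <;>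
    filter_upwards [self_mem_nhdsWithin] with ε hε
  · rw [hV_eq, hasymp_eq ε hε]
  · rw [optimalSize_half_right hc1 hα hβ hε]
  · rw [optimalSize_mul_sqrt_half_left hν1 hγ0 hα hβ hε]
  · rw [hcost, hasymp_eq ε hε]

/-- Asymptotically optimal computational cost of the crude stochastic approximation
estimator: with `Cost(n,M) = K M n` and step `γ(p) = γ₀/p^β`, the infimum of the
cost over `(n,M) ∈ (ℕ*)²` subject to
`c₁ n^{−α}(1+|ε₁(n)|) + ν₁ γ(M)^{1/2}(1+φ₁(n)+φ₂(M)) ≤ ε` is equivalent, as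
`ε → 0⁺`, to `K γ₀^{1/β} ν₁^{2/β} c₁^{1/α} ε^{−(2/β+1/α)} (1+2α/β)^{1/α}
(1+β/(2α))^{2/β}`, and this bound is achieved with parameters
`n(ε) ∼ (2α/β+1)^{1/α} c₁^{1/α} ε^{−1/α}` and
`M(ε) ∼ γ₀^{1/β} ν₁^{2/β} (1+β/(2α))^{2/β} ε^{−2/β}`. -/
theorem crude_sa_cost_asymptotics (α : ℝ) (hα : 0 < α)
    (β γ0 K c1 ν1 : ℝ) (hβ1 : 1 / 2 < β) (hβ2 : β ≤ 1)
    (hγ0 : 0 < γ0) (hK : 0 < K) (hc1 : 0 < c1) (hν1 : 0 < ν1)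
    (ε1 : ℕ → ℝ) (hε1 : Tendsto ε1 atTop (𝓝 0))
    (φ1 φ2 : ℕ → ℝ) (hφ1nn : ∀ n, 0 ≤ φ1 n) (hφ2nn : ∀ M, 0 ≤ φ2 M)
    (hφ1 : Tendsto φ1 atTop (𝓝 0)) (hφ2 : Tendsto φ2 atTop (𝓝 0))
    (hφ2anti : Antitone φ2)
    (constraint : ℕ → ℕ → ℝ → Prop)
    (hconstraint : ∀ n M ε, constraint n M ε ↔
      c1 * (n : ℝ) ^ (-α) * (1 + |ε1 n|) +
          ν1 * Real.sqrt (γ0 / (M : ℝ) ^ β) * (1 + φ1 n + φ2 M) ≤ ε)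
    (cost : ℕ → ℕ → ℝ) (hcost : ∀ n M, cost n M = K * (M : ℝ) * (n : ℝ))
    (V : ℝ → ℝ)
    (hV : ∀ ε, V ε = sInf {c : ℝ | ∃ n M : ℕ, 1 ≤ n ∧ 1 ≤ M ∧
      constraint n M ε ∧ c = cost n M})
    (asymp : ℝ → ℝ)
    (hasymp : ∀ ε, asymp ε =
      K * γ0 ^ (1 / β) * ν1 ^ (2 / β) * c1 ^ (1 / α) *
        ε ^ (-(2 / β + 1 / α)) * (1 + 2 * α / β) ^ (1 / α) *
        (1 + β / (2 * α)) ^ (2 / β)) :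
    Tendsto (fun ε => V ε / asymp ε) (𝓝[>] (0 : ℝ)) (𝓝 1) ∧
      ∃ nf Mf : ℝ → ℕ,
        (∀ᶠ ε in 𝓝[>] (0 : ℝ), constraint (nf ε) (Mf ε) ε) ∧
        Tendsto (fun ε => (nf ε : ℝ) /
            ((2 * α / β + 1) ^ (1 / α) * c1 ^ (1 / α) * ε ^ (-(1 / α))))
          (𝓝[>] (0 : ℝ)) (𝓝 1) ∧
        Tendsto (fun ε => (Mf ε : ℝ) /
            (γ0 ^ (1 / β) * ν1 ^ (2 / β) * (1 + β / (2 * α)) ^ (2 / β) *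
              ε ^ (-(2 / β))))
          (𝓝[>] (0 : ℝ)) (𝓝 1) ∧
        Tendsto (fun ε => cost (nf ε) (Mf ε) / asymp ε) (𝓝[>] (0 : ℝ)) (𝓝 1) :=
  crude_sa_cost_asymptotics_general α hα β γ0 K c1 ν1 (one_half_pos.trans hβ1) hγ0 hK hc1 hν1
    ε1 hε1 φ1 φ2 hφ1nn hφ2nn hφ1 hφ2 constraint hconstraint cost hcost V hV asymp hasymp
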